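/- arXiv:2311.08745 — 2 statements merged into one kernel-verified Lean document; each statement's English description precedes it below -/
import Mathlib

section
/- Let γ ∈ [1/2, 1), let δ_1 > 0 and define δ_{m+1} := γ·δ_m for all m ≥ 1. For each m, let F_m : ℝ^d → ℝ be differentiable and σ_m-strongly convex (σ_m > 0) with global minimizer x*_m, and suppose the minimizers satisfy ‖x*_m − x*_{m+1}‖ ≤ δ_{m+1} for all m. Let (x_m) be a sequence of points in ℝ^d such that ‖x_1 − x*_1‖ ≤ 3δ_1 and, for each m, the approximate minimization guarantee F_m(x_{m+1}) − F_m(x*_m) ≤ σ_m·δ_m²/2 holds. Then for every m ≥ 1, ‖x_m − x*_m‖ ≤ 3δ_m. -/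
open scoped RealInnerProductSpace

/-!
Strong convexity enters only through the quadratic growth `F_m(z) ≥ F_m(x*_m) + σ_m/2 ‖z − x*_m‖²`
at the minimizer, where the gradient term vanishes. With the approximate minimization guarantee it
puts `x_{m+1}` within `δ_m` of `x*_m`, while the next minimizer is within `δ_{m+1}` of `x*_m`. Since
`δ_m ≤ 2 δ_{m+1}`, the distance from `x_{m+1}` to `x*_{m+1}` is at most
`δ_m + δ_{m+1} ≤ 3 δ_{m+1}`.
-/

/-- The function `f` satisfies the quadratic growth condition with constant `σ` at `c`: this is what
`σ`-strong convexity gives at a minimizer, and it makes sense in any metric space. The factor `1/2`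
matches the modulus of strong convexity. -/
def QuadraticGrowthAt {X : Type*} [PseudoMetricSpace X] (σ : ℝ) (f : X → ℝ) (c : X) : Prop :=
  ∀ z, f c + σ / 2 * dist z c ^ 2 ≤ f z

theorem QuadraticGrowthAt.dist_le {X : Type*} [PseudoMetricSpace X] {σ r : ℝ} {f : X → ℝ}
    {c z : X} (hf : QuadraticGrowthAt σ f c) (hσ : 0 < σ) (hr : 0 ≤ r)
    (hz : f z - f c ≤ σ * r ^ 2 / 2) : dist z c ≤ r := by
  have hmul : σ * dist z c ^ 2 ≤ σ * r ^ 2 := by linarith [hf z]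
  have hsq : dist z c ^ 2 ≤ r ^ 2 := le_of_mul_le_mul_left hmul hσ
  exact le_of_sq_le_sq hsq hr

section Gradient

variable {E : Type*} [NormedAddCommGroup E] [InnerProductSpace ℝ E] [CompleteSpace E]
  {f : E → ℝ} {g c : E}

theorem hasGradientAt_eq_zero_of_isLocalMin (hc : IsLocalMin f c) (hg : HasGradientAt f g c) :
    g = 0 := by
  simpa using hc.hasFDerivAt_eq_zero hg.hasFDerivAt

theorem quadraticGrowthAt_of_isLocalMin {σ : ℝ} (hc : IsLocalMin f c) (hg : HasGradientAt f g c)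
    (hf : ∀ z, f c + ⟪g, z - c⟫ + σ / 2 * ‖z - c‖ ^ 2 ≤ f z) : QuadraticGrowthAt σ f c := by
  intro z
  simpa [hasGradientAt_eq_zero_of_isLocalMin hc hg, dist_eq_norm] using hf z

end Gradient

theorem dist_le_three_mul_of_drift {X : Type*} [PseudoMetricSpace X] {x c c' : X} {r r' : ℝ}
    (hx : dist x c ≤ r) (hdrift : dist c c' ≤ r') (hr : r ≤ 2 * r') : dist x c' ≤ 3 * r' :=
  calc
    dist x c' ≤ dist x c + dist c c' := dist_triangle x c c'
    _ ≤ 2 * r' + r' := add_le_add (hx.trans hr) hdrift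
    _ = 3 * r' := by ring

theorem graduated_iterates_stay_in_strongly_convex_region_general
    {X : Type*} [PseudoMetricSpace X] {δ σ : ℕ → ℝ} {F : ℕ → X → ℝ} {xs x : ℕ → X}
    (hδ : ∀ m, 1 ≤ m → δ m ≤ 2 * δ (m + 1)) (hσ : ∀ m, 1 ≤ m → 0 < σ m)
    (hgrowth : ∀ m, 1 ≤ m → QuadraticGrowthAt (σ m) (F m) (xs m))
    (hdrift : ∀ m, 1 ≤ m → dist (xs m) (xs (m + 1)) ≤ δ (m + 1))
    (hinit : dist (x 1) (xs 1) ≤ 3 * δ 1)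
    (happrox : ∀ m, 1 ≤ m → F m (x (m + 1)) - F m (xs m) ≤ σ m * δ m ^ 2 / 2) :
    ∀ m, 1 ≤ m → dist (x m) (xs m) ≤ 3 * δ m := by
  intro m hm
  induction m, hm using Nat.le_induction with
  | base => exact hinit
  | succ m hm ih =>
    have hδ_nonneg : 0 ≤ δ m := by linarith [dist_nonneg.trans ih]
    have hclose : dist (x (m + 1)) (xs m) ≤ δ m :=
      (hgrowth m hm).dist_le (hσ m hm) hδ_nonneg (happrox m hm)
    exact dist_le_three_mul_of_drift hclose (hdrift m hm) (hδ m hm)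

theorem le_two_mul_of_eq_mul {γ a b : ℝ} (hγ : 1 / 2 ≤ γ) (hb : 0 ≤ b) (h : b = γ * a) :
    a ≤ 2 * b := by
  have ha : 0 ≤ a := nonneg_of_mul_nonneg_right (h ▸ hb) (by linarith)
  calc
    a ≤ 2 * γ * a := le_mul_of_one_le_left ha (by linarith)
    _ = 2 * b := by rw [h, mul_assoc]

/-- Proposition 4.4: along the graduated-optimization schedule `δ_{m+1} = γ δ_m` with
`γ ∈ [1/2, 1)`, if each stage's approximate minimization guarantee
`F_m(x_{m+1}) − F_m(x*_m) ≤ σ_m δ_m²/2` holds and the minimizers drift by at most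
`‖x*_m − x*_{m+1}‖ ≤ δ_{m+1}`, then every stage's starting point stays in the strongly
convex region: `‖x_m − x*_m‖ ≤ 3δ_m`. -/
theorem graduated_iterates_stay_in_strongly_convex_region
    {d : ℕ} (γ : ℝ) (hγ1 : 1 / 2 ≤ γ) (hγ2 : γ < 1)
    (δ : ℕ → ℝ) (hδ1 : 0 < δ 1)
    (hδrec : ∀ m : ℕ, 1 ≤ m → δ (m + 1) = γ * δ m)
    (F : ℕ → EuclideanSpace ℝ (Fin d) → ℝ) (σ : ℕ → ℝ)
    (hσ : ∀ m : ℕ, 1 ≤ m → 0 < σ m)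
    (hdiff : ∀ m : ℕ, 1 ≤ m → Differentiable ℝ (F m))
    (hsc : ∀ m : ℕ, 1 ≤ m → ∀ x y : EuclideanSpace ℝ (Fin d),
      F m x + ⟪gradient (F m) x, y - x⟫ + σ m / 2 * ‖y - x‖ ^ 2 ≤ F m y)
    (xs : ℕ → EuclideanSpace ℝ (Fin d))
    (hmin : ∀ m : ℕ, 1 ≤ m → ∀ z, F m (xs m) ≤ F m z)
    (hdrift : ∀ m : ℕ, 1 ≤ m → ‖xs m - xs (m + 1)‖ ≤ δ (m + 1))
    (x : ℕ → EuclideanSpace ℝ (Fin d))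
    (hinit : ‖x 1 - xs 1‖ ≤ 3 * δ 1)
    (happrox : ∀ m : ℕ, 1 ≤ m → F m (x (m + 1)) - F m (xs m) ≤ σ m * δ m ^ 2 / 2) :
    ∀ m : ℕ, 1 ≤ m → ‖x m - xs m‖ ≤ 3 * δ m := by
  simp only [← dist_eq_norm] at hdrift hinit ⊢
  exact graduated_iterates_stay_in_strongly_convex_region_general
    (fun m hm ↦ le_two_mul_of_eq_mul hγ1 (dist_nonneg.trans (hdrift m hm)) (hδrec m hm)) hσ
    (fun m hm ↦ quadraticGrowthAt_of_isLocalMin (.of_forall (hmin m hm))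
      (hdiff m hm (xs m)).hasGradientAt (hsc m hm (xs m))) hdrift hinit happrox
end

section
/- Let δ ∈ ℝ and define g_δ : (0, 1] → ℝ by g_δ(x) := −log x + δ²/(2x²). Then g_δ is 1-strongly convex on (0, 1] (its second derivative g_δ''(x) = 1/x² + 3δ²/x⁴ is at least 1 for all x ∈ (0, 1]), g_δ is nonincreasing on (0, 1] (g_δ'(x) = −1/x − δ²/x³ < 0 for x ∈ (0, 1]), and g_δ attains its minimum over (0, 1] exactly at x = 1. -/
open Filter Set Topology

theorem add_fderiv_add_le_of_uniformConvexOn {E : Type*} [NormedAddCommGroup E] [NormedSpace ℝ E]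
    {s : Set E} {φ : ℝ → ℝ} {f : E → ℝ} {f' : E →L[ℝ] ℝ} {x y : E} (hf : UniformConvexOn s φ f)
    (hx : x ∈ s) (hy : y ∈ s) (hf' : HasFDerivWithinAt f f' s x) :
    f x + f' (y - x) + φ ‖x - y‖ ≤ f y := by
  -- Uniform convexity along the segment bounds the slope of `f` between `x` and `x + t (y - x)` by
  -- `f y - f x - (1 - t) φ ‖x - y‖`; let `t → 0⁺`.
  let ℓ : ℝ → E := AffineMap.lineMap x y
  have hℓ_zero : ℓ 0 = x := AffineMap.lineMap_apply_zero x y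
  have hℓ_mem : MapsTo ℓ (Ioc 0 1) s := fun t ht =>
    hf.1.lineMap_mem hx hy ⟨ht.1.le, ht.2⟩
  have hderiv : HasDerivWithinAt (f ∘ ℓ) (f' (y - x)) (Ioc 0 1) 0 :=
    HasFDerivWithinAt.comp_hasDerivWithinAt 0 (by rwa [hℓ_zero])
      AffineMap.hasDerivWithinAt_lineMap hℓ_mem
  have hslope : ∀ t ∈ Ioc (0 : ℝ) 1, slope (f ∘ ℓ) 0 t ≤ f y - f x - (1 - t) * φ ‖x - y‖ := by
    rintro t ⟨ht_pos, ht_le⟩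
    have hseg := hf.2 hx hy (sub_nonneg.2 ht_le) ht_pos.le (sub_add_cancel 1 t)
    rw [← AffineMap.lineMap_apply_module, smul_eq_mul, smul_eq_mul] at hseg
    rw [slope_def_field, sub_zero, div_le_iff₀ ht_pos, Function.comp_apply, Function.comp_apply,
      hℓ_zero]
    linarith
  have hslope_tendsto := (hasDerivWithinAt_iff_tendsto_slope' (by simp)).1 hderiv
  have hbound_tendsto : Tendsto (fun t : ℝ => f y - f x - (1 - t) * φ ‖x - y‖)
      (𝓝[Ioc 0 1] 0) (𝓝 (f y - f x - (1 - 0) * φ ‖x - y‖)) :=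
    Continuous.continuousWithinAt (by fun_prop)
  have : (𝓝[Ioc 0 1] (0 : ℝ)).NeBot := by
    rw [nhdsWithin_Ioc_eq_nhdsGT one_pos]
    infer_instance
  have hle := le_of_tendsto_of_tendsto hslope_tendsto hbound_tendsto
    (eventually_nhdsWithin_of_forall hslope)
  linarith

theorem add_deriv_mul_sub_add_le_of_strongConvexOn {s : Set ℝ} {m : ℝ} {f : ℝ → ℝ} {x y : ℝ}
    (hf : StrongConvexOn s m f) (hx : x ∈ s) (hy : y ∈ s) (hf' : DifferentiableAt ℝ f x) :
    f x + deriv f x * (y - x) + m / 2 * (y - x) ^ 2 ≤ f y := by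
  have htangent := add_fderiv_add_le_of_uniformConvexOn hf hx hy
    hf'.hasDerivAt.hasFDerivAt.hasFDerivWithinAt
  rwa [ContinuousLinearMap.toSpanSingleton_apply, smul_eq_mul, mul_comm (y - x), norm_sub_rev,
    Real.norm_eq_abs, sq_abs] at htangent

theorem strongConvexOn_of_hasDerivWithinAt2_ge {D : Set ℝ} (hD : Convex ℝ D) {m : ℝ}
    {f f' f'' : ℝ → ℝ} (hf : ContinuousOn f D)
    (hf' : ∀ x ∈ interior D, HasDerivWithinAt f (f' x) (interior D) x)
    (hf'' : ∀ x ∈ interior D, HasDerivWithinAt f' (f'' x) (interior D) x)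
    (hm : ∀ x ∈ interior D, m ≤ f'' x) : StrongConvexOn D m f := by
  simp only [strongConvexOn_iff_convex, Real.norm_eq_abs, sq_abs]
  refine convexOn_of_hasDerivWithinAt2_nonneg hD (f' := fun x => f' x - m * x)
    (f'' := fun x => f'' x - m) (hf.sub (by fun_prop)) (fun x hx => ?_) (fun x hx => ?_)
    fun x hx => sub_nonneg.2 (hm x hx)
  · refine (hf' x hx).fun_sub ?_
    exact (((hasDerivAt_pow 2 x).const_mul (m / 2)).congr_deriv (by ring)).hasDerivWithinAt
  · exact (hf'' x hx).fun_sub ((hasDerivAt_const_mul m).hasDerivWithinAt)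

/-- The second-order Taylor approximation `g_δ` of the Gaussian smoothing, with standard deviation
`δ`, of the cross-entropy loss `g x = -log x`. It is meant for `0 < x`; elsewhere the conventions
for `Real.log` and division by zero apply. -/
noncomputable def smoothedCrossEntropy (δ x : ℝ) : ℝ :=
  -Real.log x + δ ^ 2 / (2 * x ^ 2)

namespace smoothedCrossEntropy

variable {x : ℝ} (δ : ℝ)

theorem hasDerivAt (hx : x ≠ 0) :
    HasDerivAt (smoothedCrossEntropy δ) (-1 / x - δ ^ 2 / x ^ 3) x := by
  have hlog := (Real.hasDerivAt_log hx).fun_neg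
  have hinv := (hasDerivAt_const x (δ ^ 2)).fun_div ((hasDerivAt_pow 2 x).const_mul 2)
    (by positivity)
  refine (hlog.fun_add hinv).congr_deriv ?_
  field_simp
  ring

theorem hasDerivAt_deriv (hx : x ≠ 0) :
    HasDerivAt (fun z => -1 / z - δ ^ 2 / z ^ 3) (1 / x ^ 2 + 3 * δ ^ 2 / x ^ 4) x := by
  have hinv := (hasDerivAt_const x (-1 : ℝ)).fun_div (hasDerivAt_id' x) hx
  have hcube := (hasDerivAt_const x (δ ^ 2)).fun_div (hasDerivAt_pow 3 x) (by positivity)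
  refine (hinv.fun_sub hcube).congr_deriv ?_
  field_simp
  ring

theorem continuousOn_Ioi : ContinuousOn (smoothedCrossEntropy δ) (Ioi 0) :=
  fun _ hx => (hasDerivAt δ (ne_of_gt hx)).continuousAt.continuousWithinAt

theorem strongConvexOn_Ioc (b : ℝ) :
    StrongConvexOn (Ioc 0 b) (1 / b ^ 2 + 3 * δ ^ 2 / b ^ 4) (smoothedCrossEntropy δ) := by
  refine strongConvexOn_of_hasDerivWithinAt2_ge (convex_Ioc 0 b)
    ((continuousOn_Ioi δ).mono Ioc_subset_Ioi_self)
    (f' := fun x => -1 / x - δ ^ 2 / x ^ 3) (f'' := fun x => 1 / x ^ 2 + 3 * δ ^ 2 / x ^ 4)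
    ?_ ?_ ?_ <;> rw [interior_Ioc] <;> rintro x ⟨hx_pos, hx_lt⟩
  · exact (hasDerivAt δ hx_pos.ne').hasDerivWithinAt
  · exact (hasDerivAt_deriv δ hx_pos.ne').hasDerivWithinAt
  · gcongr

theorem strongConvexOn_Ioc_one : StrongConvexOn (Ioc 0 1) 1 (smoothedCrossEntropy δ) :=
  (strongConvexOn_Ioc δ 1).mono (by norm_num; positivity)

theorem strictAntiOn_Ioi : StrictAntiOn (smoothedCrossEntropy δ) (Ioi 0) := by
  refine strictAntiOn_of_hasDerivWithinAt_neg (convex_Ioi 0) (continuousOn_Ioi δ)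
    (f' := fun x => -1 / x - δ ^ 2 / x ^ 3) ?_ ?_ <;> rw [interior_Ioi] <;> intro x hx
  · exact (hasDerivAt δ (ne_of_gt hx)).hasDerivWithinAt
  · rw [mem_Ioi] at hx
    have hlog : -1 / x < 0 := div_neg_of_neg_of_pos neg_one_lt_zero hx
    have hinv : 0 ≤ δ ^ 2 / x ^ 3 := by positivity
    linarith

end smoothedCrossEntropy

/-- Proposition 4.2 (cross-entropy part): the smoothed cross-entropy loss
`g_δ(x) = −log x + δ²/(2x²)` is 1-strongly convex on `(0, 1]`
(i.e. `g_δ(y) ≥ g_δ(x) + g_δ'(x)(y − x) + (1/2)(y − x)²` there), is nonincreasing on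
`(0, 1]`, and attains its minimum over `(0, 1]` exactly at `x = 1`. -/
theorem smoothed_cross_entropy_one_nice (δ : ℝ) :
    (∀ x ∈ Set.Ioc (0 : ℝ) 1, ∀ y ∈ Set.Ioc (0 : ℝ) 1,
      (fun z : ℝ => -Real.log z + δ ^ 2 / (2 * z ^ 2)) x
        + deriv (fun z : ℝ => -Real.log z + δ ^ 2 / (2 * z ^ 2)) x * (y - x)
        + 1 / 2 * (y - x) ^ 2 ≤
      (fun z : ℝ => -Real.log z + δ ^ 2 / (2 * z ^ 2)) y) ∧
    (∀ x ∈ Set.Ioc (0 : ℝ) 1, ∀ y ∈ Set.Ioc (0 : ℝ) 1, x ≤ y →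
      (fun z : ℝ => -Real.log z + δ ^ 2 / (2 * z ^ 2)) y ≤
        (fun z : ℝ => -Real.log z + δ ^ 2 / (2 * z ^ 2)) x) ∧
    (∀ x ∈ Set.Ioc (0 : ℝ) 1,
      (fun z : ℝ => -Real.log z + δ ^ 2 / (2 * z ^ 2)) 1 ≤
        (fun z : ℝ => -Real.log z + δ ^ 2 / (2 * z ^ 2)) x) ∧
    (∀ x ∈ Set.Ioc (0 : ℝ) 1,
      (fun z : ℝ => -Real.log z + δ ^ 2 / (2 * z ^ 2)) x =
        (fun z : ℝ => -Real.log z + δ ^ 2 / (2 * z ^ 2)) 1 → x = 1) := by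
  have hanti := smoothedCrossEntropy.strictAntiOn_Ioi δ
  refine ⟨fun x hx y hy => ?_, fun x hx y hy hxy => ?_, fun x hx => ?_, fun x hx hx_eq => ?_⟩
  · exact add_deriv_mul_sub_add_le_of_strongConvexOn
      (smoothedCrossEntropy.strongConvexOn_Ioc_one δ) hx hy
      (smoothedCrossEntropy.hasDerivAt δ hx.1.ne').differentiableAt
  · exact hanti.antitoneOn hx.1 hy.1 hxy
  · exact hanti.antitoneOn hx.1 (mem_Ioi.2 one_pos) hx.2
  · exact hanti.injOn hx.1 (mem_Ioi.2 one_pos) hx_eq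
end
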